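/- For every integer α ≥ 1, the graph G(α, 1, 0) is not dimension-critical. -/

import Mathlib

/-- `G` has a unit-distance representation in `ℝ^n`: an injective map of the vertices to
points of Euclidean `n`-space with adjacent vertices at Euclidean distance exactly `1`. -/
def SimpleGraph.HasUnitDistRep {V : Type*} (G : SimpleGraph V) (n : ℕ) : Prop :=
  ∃ f : V → EuclideanSpace ℝ (Fin n),
    Function.Injective f ∧ ∀ ⦃u v⦄, G.Adj u v → Dist.dist (f u) (f v) = 1

/-- The dimension of `G`: the least `n` such that `G` has a unit-distance representation
in `ℝ^n`. -/
noncomputable def SimpleGraph.udim {V : Type*} (G : SimpleGraph V) : ℕ :=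
  sInf {n | G.HasUnitDistRep n}

/-- `G` is dimension-critical: deleting any edge strictly lowers the dimension. -/
def SimpleGraph.IsDimCritical {V : Type*} (G : SimpleGraph V) : Prop :=
  ∀ e ∈ G.edgeSet, (G.deleteEdges {e}).udim < G.udim


/-- Part sizes for the complete multipartite graph `G(α, β, γ)`:
`α` parts of size 1, `β` parts of size 2, `γ` parts of size 3. -/
def Gsize (α β γ : ℕ) : Fin α ⊕ Fin β ⊕ Fin γ → ℕ
  | Sum.inl _ => 1
  | Sum.inr (Sum.inl _) => 2
  | Sum.inr (Sum.inr _) => 3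

/-- The complete multipartite graph `G(α, β, γ)` with `α` parts of size 1, `β` parts of
size 2, and `γ` parts of size 3; vertices are adjacent iff they lie in different parts. -/
def Gmp (α β γ : ℕ) :
    SimpleGraph (Σ i : Fin α ⊕ Fin β ⊕ Fin γ, Fin (Gsize α β γ i)) :=
  SimpleGraph.completeMultipartiteGraph fun i => Fin (Gsize α β γ i)

/-!
A unit-distance representation sends an `(n + 1)`-clique to `n + 1` points at pairwise distance
`1`. Such points are affinely independent, so a graph that contains an `(n + 1)`-clique and is
representable in `ℝⁿ` has dimension exactly `n`. Deleting an edge with an endpoint outside the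
clique leaves both properties, and hence the dimension, unchanged.

For `G(α, 1, 0)` and `n = α`, the clique takes one vertex from each part. The representation puts
the singleton parts at the vertices `e_i / √2` of a regular simplex and the two vertices of the
remaining part at the two points of the line spanned by `(1, …, 1)` at distance `1` from all of
them.
-/

section Equilateral

variable {ι E P : Type*} [NormedAddCommGroup E] [InnerProductSpace ℝ E] [MetricSpace P]
  [NormedAddTorsor E P]

theorem affineIndependent_of_pairwise_dist_eq {p : ι → P} {r : ℝ} (hr : r ≠ 0)
    (hp : Pairwise fun i j => dist (p i) (p j) = r) : AffineIndependent ℝ p := by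
  classical
  intro s w hw hvsub
  have row_sum : ∀ i ∈ s,
      ∑ j ∈ s, w i * w j * (dist (p i) (p j) * dist (p i) (p j)) = -(r ^ 2 * w i ^ 2) := by
    intro i hi
    have entry : ∀ j, w i * w j * (dist (p i) (p j) * dist (p i) (p j)) =
        r ^ 2 * w i * w j - if i = j then r ^ 2 * w i ^ 2 else 0 := by
      intro j
      split_ifs with hij
      · subst hij
        rw [dist_self]
        ring
      · rw [hp hij]
        ring
    simp_rw [entry, Finset.sum_sub_distrib, ← Finset.mul_sum, hw, Finset.sum_ite_eq, if_pos hi]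
    ring
  have sum_sq : ∑ i ∈ s, w i ^ 2 = 0 := by
    have hinner := EuclideanGeometry.inner_weightedVSub p hw p hw
    rw [hvsub, inner_zero_left, Finset.sum_congr rfl row_sum, Finset.sum_neg_distrib, neg_neg,
      ← Finset.mul_sum] at hinner
    simpa [hr] using hinner.symm
  intro i hi
  exact pow_eq_zero_iff two_ne_zero |>.mp
    ((Finset.sum_eq_zero_iff_of_nonneg fun j _ => sq_nonneg (w j)).mp sum_sq i hi)

theorem card_le_finrank_add_one_of_pairwise_dist_eq [Fintype ι] [FiniteDimensional ℝ E]
    {p : ι → P} {r : ℝ} (hr : r ≠ 0) (hp : Pairwise fun i j => dist (p i) (p j) = r) :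
    Fintype.card ι ≤ Module.finrank ℝ E + 1 :=
  (affineIndependent_of_pairwise_dist_eq hr hp).card_le_finrank_succ.trans
    (Nat.add_le_add_right (Submodule.finrank_le _) 1)

end Equilateral

section UnitDistRep

variable {V : Type*} {G H : SimpleGraph V} {n k : ℕ} {s : Finset V} {e : Sym2 V} {v : V}

theorem hasUnitDistRep_mono (hGH : G ≤ H) (hH : H.HasUnitDistRep n) : G.HasUnitDistRep n :=
  let ⟨f, hf, hdist⟩ := hH
  ⟨f, hf, fun _ _ hadj => hdist (hGH hadj)⟩

theorem le_add_one_of_isNClique_of_hasUnitDistRep (hs : G.IsNClique k s)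
    (hG : G.HasUnitDistRep n) : k ≤ n + 1 := by
  obtain ⟨f, -, hdist⟩ := hG
  have equilateral : Pairwise fun u v : s => dist (f u) (f v) = 1 := fun u v huv =>
    hdist (hs.isClique u.2 v.2 (Subtype.coe_ne_coe.mpr huv))
  simpa [hs.card_eq] using card_le_finrank_add_one_of_pairwise_dist_eq one_ne_zero equilateral

theorem udim_eq_of_isNClique_of_hasUnitDistRep (hs : G.IsNClique (n + 1) s)
    (hG : G.HasUnitDistRep n) : G.udim = n :=
  le_antisymm (Nat.sInf_le hG) <| le_csInf ⟨n, hG⟩ fun _ hm =>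
    Nat.le_of_succ_le_succ (le_add_one_of_isNClique_of_hasUnitDistRep hs hm)

theorem isNClique_deleteEdges_singleton (hs : G.IsNClique k s) (hve : v ∈ e) (hvs : v ∉ s) :
    (G.deleteEdges {e}).IsNClique k s := by
  refine ⟨fun a ha b hb hab => ?_, hs.card_eq⟩
  rw [SimpleGraph.deleteEdges_adj]
  refine ⟨hs.isClique ha hb hab, ?_⟩
  rintro rfl
  rcases Sym2.mem_iff.mp hve with rfl | rfl
  exacts [hvs ha, hvs hb]

theorem not_isDimCritical_of_isNClique_of_hasUnitDistRep (hs : G.IsNClique (n + 1) s)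
    (hG : G.HasUnitDistRep n) (he : e ∈ G.edgeSet) (hve : v ∈ e) (hvs : v ∉ s) :
    ¬ G.IsDimCritical := by
  intro hcrit
  have hdel : (G.deleteEdges {e}).udim = n :=
    udim_eq_of_isNClique_of_hasUnitDistRep (isNClique_deleteEdges_singleton hs hve hvs)
      (hasUnitDistRep_mono (G.deleteEdges_le {e}) hG)
  exact (hcrit e he).ne (hdel.trans (udim_eq_of_isNClique_of_hasUnitDistRep hs hG).symm)

end UnitDistRep

section CompleteMultipartite

variable {ι : Type*} {V : ι → Type*} {n : ℕ}

theorem hasUnitDistRep_completeMultipartiteGraph (f : ∀ i, V i → EuclideanSpace ℝ (Fin n))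
    (hinj : ∀ i, Function.Injective (f i))
    (hdist : ∀ ⦃i j⦄, i ≠ j → ∀ x y, dist (f i x) (f j y) = 1) :
    (SimpleGraph.completeMultipartiteGraph V).HasUnitDistRep n := by
  refine ⟨fun v => f v.1 v.2, ?_, fun u v huv => hdist huv u.2 v.2⟩
  rintro ⟨i, x⟩ ⟨j, y⟩ (hxy : f i x = f j y)
  obtain rfl : i = j := by
    by_contra hij
    simpa [hxy] using hdist hij x y
  rw [hinj i hxy]

theorem not_isDimCritical_completeMultipartiteGraph [Fintype ι] [∀ i, Nonempty (V i)]
    (hcard : Fintype.card ι = n + 1)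
    (hrep : (SimpleGraph.completeMultipartiteGraph V).HasUnitDistRep n)
    {i j : ι} (hij : i ≠ j) [Nontrivial (V i)] :
    ¬ (SimpleGraph.completeMultipartiteGraph V).IsDimCritical := by
  let t : ∀ i, V i := fun _ => Classical.arbitrary _
  obtain ⟨x, hx⟩ := exists_ne (t i)
  have hclique := SimpleGraph.isNClique_map_copy_top
    (SimpleGraph.completeMultipartiteGraph.topEmbedding V t).toCopy
  rw [hcard] at hclique
  have hadj : (SimpleGraph.completeMultipartiteGraph V).Adj ⟨i, x⟩ ⟨j, t j⟩ := hij
  refine not_isDimCritical_of_isNClique_of_hasUnitDistRep hclique hrep hadj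
    (Sym2.mem_mk_left _ _) fun hmem => ?_
  obtain ⟨k, -, hk⟩ := Finset.mem_map.mp hmem
  obtain ⟨rfl, htx⟩ := Sigma.mk.inj hk
  exact hx (eq_of_heq htx).symm

end CompleteMultipartite

section Representation

theorem exists_ne_quadratic_eq_zero {a b c : ℝ} (ha : a ≠ 0) (h : 0 < discrim a b c) :
    ∃ x y, x ≠ y ∧ a * (x * x) + b * x + c = 0 ∧ a * (y * y) + b * y + c = 0 := by
  have hroot := quadratic_eq_zero_iff ha (Real.mul_self_sqrt h.le).symm
  refine ⟨_, _, ?_, (hroot _).mpr (.inl rfl), (hroot _).mpr (.inr rfl)⟩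
  have hpos := Real.sqrt_pos.mpr h
  rw [Ne, div_left_inj' (mul_ne_zero two_ne_zero ha)]
  linarith

variable {ι : Type*} [Fintype ι] [DecidableEq ι]

theorem dist_sq_single_single {i j : ι} (hij : i ≠ j) (a b : ℝ) :
    dist (EuclideanSpace.single i a) (EuclideanSpace.single j b) ^ 2 = a ^ 2 + b ^ 2 := by
  rw [dist_eq_norm, norm_sub_sq_real]
  simp [EuclideanSpace.inner_single_left, hij]

theorem dist_sq_single_const (i : ι) (a b : ℝ) :
    dist (EuclideanSpace.single i a) (WithLp.toLp 2 fun _ => b) ^ 2 =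
      a ^ 2 - 2 * a * b + Fintype.card ι * b ^ 2 := by
  rw [dist_eq_norm, norm_sub_sq_real, EuclideanSpace.norm_sq_eq (WithLp.toLp 2 fun _ : ι => b)]
  simp [EuclideanSpace.inner_single_left, mul_assoc]

/-- The candidate representation of `G(α, 1, 0)` in `ℝ^α`: the singleton parts go to the multiples
`a e_i` of the standard basis vectors, and the two vertices of the last part to the diagonal
vectors with all coordinates equal to `b 0` and `b 1`. -/
noncomputable def simplexDiagonalMap (α : ℕ) (a : ℝ) (b : Fin 2 → ℝ) :
    ∀ i, Fin (Gsize α 1 0 i) → EuclideanSpace ℝ (Fin α)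
  | .inl i, _ => EuclideanSpace.single i a
  | .inr (.inl _), k => WithLp.toLp 2 fun _ => b k
  | .inr (.inr j), _ => j.elim0

theorem simplexDiagonalMap_injective {α : ℕ} (hα : 0 < α) (a : ℝ) {b : Fin 2 → ℝ}
    (hb : Function.Injective b) : ∀ i, Function.Injective (simplexDiagonalMap α a b i)
  | .inl _ => fun k l _ => Subsingleton.elim (α := Fin 1) k l
  | .inr (.inl _) => fun _ _ hkl => hb (congrFun (congrArg WithLp.ofLp hkl) ⟨0, hα⟩)
  | .inr (.inr j) => j.elim0

theorem dist_simplexDiagonalMap {α : ℕ} {a : ℝ} {b : Fin 2 → ℝ} (ha : a ^ 2 + a ^ 2 = 1)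
    (hb : ∀ k, a ^ 2 - 2 * a * b k + α * b k ^ 2 = 1) ⦃i j⦄ (hij : i ≠ j)
    (x : Fin (Gsize α 1 0 i)) (y : Fin (Gsize α 1 0 j)) :
    dist (simplexDiagonalMap α a b i x) (simplexDiagonalMap α a b j y) = 1 := by
  have single_diagonal (i : Fin α) (k : Fin 2) :
      dist (EuclideanSpace.single i a) (WithLp.toLp 2 fun _ => b k) = 1 := by
    rw [← pow_eq_one_iff_of_nonneg dist_nonneg two_ne_zero, dist_sq_single_const,
      Fintype.card_fin, hb]
  match i, j with
  | .inl i, .inl j =>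
    have hne : i ≠ j := ne_of_apply_ne _ hij
    exact (pow_eq_one_iff_of_nonneg dist_nonneg two_ne_zero).mp
      ((dist_sq_single_single hne a a).trans ha)
  | .inl i, .inr (.inl _) => exact single_diagonal i y
  | .inr (.inl _), .inl j => exact (dist_comm _ _).trans (single_diagonal j x)
  | .inr (.inl i), .inr (.inl j) => exact absurd (by rw [Subsingleton.elim i j]) hij
  | .inr (.inr i), _ => exact i.elim0
  | _, .inr (.inr j) => exact j.elim0

theorem hasUnitDistRep_Gmp_one_zero {α : ℕ} (hα : 0 < α) : (Gmp α 1 0).HasUnitDistRep α := by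
  obtain ⟨a, ha⟩ : ∃ a : ℝ, a ^ 2 = 1 / 2 := ⟨√(1 / 2), Real.sq_sqrt (by norm_num)⟩
  have hdiscrim : discrim (α : ℝ) (-2 * a) (a ^ 2 - 1) = 2 * (α + 1) := by
    rw [discrim]
    linear_combination (4 - 4 * (α : ℝ)) * ha
  have hpos : 0 < discrim (α : ℝ) (-2 * a) (a ^ 2 - 1) := by
    rw [hdiscrim]
    positivity
  obtain ⟨b₀, b₁, hne, hb₀, hb₁⟩ :=
    exists_ne_quadratic_eq_zero (Nat.cast_ne_zero.mpr hα.ne') hpos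
  have hinj : Function.Injective ![b₀, b₁] := by
    simpa [Function.Injective, Fin.forall_fin_two] using ⟨hne, hne.symm⟩
  have hb : ∀ k, a ^ 2 - 2 * a * ![b₀, b₁] k + α * ![b₀, b₁] k ^ 2 = 1 := by
    rw [Fin.forall_fin_two]
    constructor <;> simp only [Matrix.cons_val_zero, Matrix.cons_val_one] <;> linarith
  exact hasUnitDistRep_completeMultipartiteGraph (simplexDiagonalMap α a ![b₀, b₁])
    (simplexDiagonalMap_injective hα a hinj) (dist_simplexDiagonalMap (by linarith) hb)

end Representation

theorem Gsize_pos (α β γ : ℕ) : ∀ i, 0 < Gsize α β γ i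
  | .inl _ => one_pos
  | .inr (.inl _) => two_pos
  | .inr (.inr _) => three_pos

theorem Gmp_alpha_one_zero_not_dimCritical (α : ℕ) (hα : 1 ≤ α) :
    ¬ (Gmp α 1 0).IsDimCritical := by
  have hnonempty (i) : Nonempty (Fin (Gsize α 1 0 i)) := ⟨0, Gsize_pos α 1 0 i⟩
  have hpair : Nontrivial (Fin (Gsize α 1 0 (.inr (.inl 0)))) :=
    inferInstanceAs (Nontrivial (Fin 2))
  have hparts : Fintype.card (Fin α ⊕ Fin 1 ⊕ Fin 0) = α + 1 := by simp
  exact not_isDimCritical_completeMultipartiteGraph hparts (hasUnitDistRep_Gmp_one_zero hα)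
    (i := .inr (.inl 0)) (j := .inl ⟨0, hα⟩) Sum.inr_ne_inl
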